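/- Let ψ : Fin 2 → Fin 2 → Fin n → ℂ be any vector with coefficient matrices A^l = (ψ i j l)_{ij}. Then there exist unitary matrices U, V ∈ U(2) and W ∈ U(n) such that the transformed coefficient matrices B^l, defined by (B^l)_{ij} = ∑_{i',j',l'} U_{i i'} V_{j j'} W_{l l'} ψ i' j' l', satisfy: (B^l)† B^l is a diagonal matrix for every l : Fin n. Moreover, there exist (in general different) unitaries U', V' ∈ U(2) and W' ∈ U(n) such that the correspondingly transformed coefficient matrices B'^l satisfy: B'^l (B'^l)† is diagonal for every l. -/

import Mathlib

open Matrix Finset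

noncomputable section

/-- The coefficient matrices of a `2×2×n` pure state after local unitary basis changes
`U ∈ U(2)`, `V ∈ U(2)`, `W ∈ U(n)` by Alice, Bob and Sapna respectively. -/
def transformedCoeff {n : ℕ} (U V : Matrix (Fin 2) (Fin 2) ℂ)
    (W : Matrix (Fin n) (Fin n) ℂ) (ψ : Fin 2 → Fin 2 → Fin n → ℂ) (l : Fin n) :
    Matrix (Fin 2) (Fin 2) ℂ :=
  fun i j => ∑ i', ∑ j', ∑ l', U i i' * V j j' * W l l' * ψ i' j' l'

/-!
Alice can keep her basis. Bob diagonalizes his reduced density matrix `ρ = ∑ k, (A k)ᴴ * A k`, so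
from now on `ρ 0 1 = 0`. If `B l = ∑ k, W l k • A k`, then `((B l)ᴴ * B l) 0 1` is the `l`-th
diagonal entry of `W * M * Wᴴ`, where `M k k' = ((A k')ᴴ * A k) 0 1` has trace `ρ 0 1 = 0`. So Sapna
needs a unitary conjugation giving `M` a zero diagonal, i.e. a constant one. A minimizer of the sum
of the squared moduli of the diagonal entries over the compact unitary group does this, because a
rotation in the plane of two coordinates can replace two distinct diagonal entries by their mean,
which lowers that sum. The second half is the first for the transposed coefficient matrices.
-/

section Balancing

variable {𝕜 : Type*} [RCLike 𝕜]

theorem exists_norm_eq_one_and_real_combination (a b : 𝕜) :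
    ∃ (z : 𝕜) (s : ℝ), ‖z‖ = 1 ∧ a * star z + b * z = s := by
  by_cases hab : a = star b
  · refine ⟨1, 2 * RCLike.re b, norm_one, ?_⟩
    rw [hab, star_one, mul_one, mul_one, add_comm, RCLike.star_def, RCLike.add_conj]
    norm_cast
  · -- For `w = a - star b`, the number `a * star w + b * w = ‖a‖ ^ 2 - ‖b‖ ^ 2` is real.
    set w := a - star b with hw
    have hw0 : ‖w‖ ≠ 0 := norm_ne_zero_iff.mpr (sub_ne_zero.mpr hab)
    refine ⟨(‖w‖⁻¹ : ℝ) * w, ‖w‖⁻¹ * (‖a‖ ^ 2 - ‖b‖ ^ 2), ?_, ?_⟩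
    · rw [norm_mul, RCLike.norm_ofReal, abs_inv, abs_norm, inv_mul_cancel₀ hw0]
    · have ha : a * star a = (‖a‖ : 𝕜) ^ 2 := RCLike.mul_conj a
      have hb : b * star b = (‖b‖ : 𝕜) ^ 2 := RCLike.mul_conj b
      have hwstar : star w = star a - b := by rw [hw, star_sub, star_star]
      rw [star_mul', hwstar, RCLike.star_def, RCLike.conj_ofReal, ← RCLike.star_def]
      push_cast
      linear_combination (‖w‖ : 𝕜)⁻¹ * (ha - hb) + b * (‖w‖ : 𝕜)⁻¹ * hw

theorem exists_cos_sq_sub_sin_sq_add_eq_zero (s : ℝ) :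
    ∃ θ : ℝ, Real.cos θ ^ 2 - Real.sin θ ^ 2 + s * (Real.cos θ * Real.sin θ) = 0 := by
  have hcont : Continuous fun θ : ℝ ↦
      Real.cos θ ^ 2 - Real.sin θ ^ 2 + s * (Real.cos θ * Real.sin θ) := by fun_prop
  exact mem_range_of_exists_le_of_exists_ge hcont ⟨Real.pi / 2, by simp⟩ ⟨0, by simp⟩

theorem exists_unit_vector_balancing (p q r : 𝕜) :
    ∃ x y : 𝕜, x * star x + y * star y = 1 ∧
      p * (x * star x - y * star y) + q * (x * star y) + r * (y * star x) = 0 := by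
  by_cases hp : p = 0
  · exact ⟨1, 0, by simp, by simp [hp]⟩
  obtain ⟨z, s, hz, hs⟩ := exists_norm_eq_one_and_real_combination (q / p) (r / p)
  obtain ⟨θ, hθ⟩ := exists_cos_sq_sub_sin_sq_add_eq_zero s
  have hz' : z * star z = 1 := by simpa [hz] using RCLike.mul_conj z
  have hs' : q * star z + r * z = s * p := by rw [← hs]; field_simp
  have hnorm : (Real.cos θ : 𝕜) ^ 2 + (Real.sin θ : 𝕜) ^ 2 = 1 := by
    exact_mod_cast Real.cos_sq_add_sin_sq θ
  have hθ' : (Real.cos θ : 𝕜) ^ 2 - (Real.sin θ : 𝕜) ^ 2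
      + s * ((Real.cos θ : 𝕜) * (Real.sin θ : 𝕜)) = 0 := by
    exact_mod_cast congrArg (RCLike.ofReal (K := 𝕜)) hθ
  refine ⟨(Real.cos θ : 𝕜), (Real.sin θ : 𝕜) * z, ?_, ?_⟩ <;>
    simp only [star_mul', RCLike.star_def, RCLike.conj_ofReal] at hz' hs' ⊢
  · linear_combination hnorm + (Real.sin θ : 𝕜) ^ 2 * hz'
  · linear_combination p * hθ' + (Real.cos θ * Real.sin θ : 𝕜) * hs'
      - p * (Real.sin θ : 𝕜) ^ 2 * hz'

theorem two_mul_norm_midpoint_sq_lt {a b : 𝕜} (hab : a ≠ b) :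
    2 * ‖(a + b) / 2‖ ^ 2 < ‖a‖ ^ 2 + ‖b‖ ^ 2 := by
  have hpos : 0 < ‖a - b‖ := norm_pos_iff.mpr (sub_ne_zero.mpr hab)
  have hpar := parallelogram_law_with_norm 𝕜 a b
  rw [norm_div, RCLike.norm_ofNat]
  nlinarith

end Balancing

theorem mul_mul_conjTranspose_apply {m n R : Type*} [Fintype n] [NonUnitalSemiring R] [Star R]
    (A : Matrix m n R) (N : Matrix n n R) (k l : m) :
    (A * N * Aᴴ) k l = A k ⬝ᵥ N *ᵥ star (A l) := by
  rw [Matrix.mul_assoc]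
  rfl

section PlaneRotation

variable {n R : Type*} [DecidableEq n] [CommRing R] [StarRing R]

/-- The Givens rotation acting on the coordinates `i` and `j` by `!![x, y; -star y, star x]` and
fixing all the others, used to average two diagonal entries. It is meant for `i ≠ j`; for `i = j`
the second row update prevails. -/
def planeRotation (i j : n) (x y : R) : Matrix n n R :=
  ((1 : Matrix n n R).updateRow i (Pi.single i x + Pi.single j y)).updateRow j
    (Pi.single i (-star y) + Pi.single j (star x))

theorem planeRotation_apply_left {i j : n} (hij : i ≠ j) (x y : R) :
    planeRotation i j x y i = Pi.single i x + Pi.single j y := by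
  rw [planeRotation, updateRow_ne hij, updateRow_self]

theorem planeRotation_apply_right (i j : n) (x y : R) :
    planeRotation i j x y j = Pi.single i (-star y) + Pi.single j (star x) :=
  updateRow_self

theorem planeRotation_apply_of_ne {i j k : n} (hki : k ≠ i) (hkj : k ≠ j) (x y : R) :
    planeRotation i j x y k = Pi.single k 1 := by
  rw [planeRotation, updateRow_ne hkj, updateRow_ne hki]
  exact funext fun _ => one_eq_pi_single

theorem planeRotation_mem_unitaryGroup [Fintype n] {i j : n} (hij : i ≠ j) {x y : R}
    (hxy : x * star x + y * star y = 1) : planeRotation i j x y ∈ unitaryGroup n R := by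
  rw [mem_unitaryGroup_iff]
  ext k l
  change planeRotation i j x y k ⬝ᵥ star (planeRotation i j x y l) = (1 : Matrix n n R) k l
  have hcases (m : n) : m = i ∨ m = j ∨ m ≠ i ∧ m ≠ j := by tauto
  obtain rfl | rfl | ⟨hki, hkj⟩ := hcases k <;> obtain rfl | rfl | ⟨hli, hlj⟩ := hcases l
  · simpa [planeRotation_apply_left hij, hij, hij.symm, mul_comm] using hxy
  · simp [planeRotation_apply_left hij, planeRotation_apply_right, hij, hij.symm, mul_comm]
  · simp [planeRotation_apply_left hij, planeRotation_apply_of_ne hli hlj, hli, hlj, hli.symm]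
  · simp [planeRotation_apply_left hij, planeRotation_apply_right, hij, hij.symm, mul_comm]
  · simpa [planeRotation_apply_right, hij, hij.symm, mul_comm, add_comm] using hxy
  · simp [planeRotation_apply_right, planeRotation_apply_of_ne hli hlj, hli, hlj, hlj.symm]
  · simp [planeRotation_apply_left hij, planeRotation_apply_of_ne hki hkj, hki, hkj, hki.symm]
  · simp [planeRotation_apply_right, planeRotation_apply_of_ne hki hkj, hkj, hki.symm]
  · simp [planeRotation_apply_of_ne hki hkj, planeRotation_apply_of_ne hli hlj, one_apply,
      Pi.single_apply, eq_comm]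

variable [Fintype n]

theorem planeRotation_conj_apply_left {i j : n} (hij : i ≠ j) (x y : R) (N : Matrix n n R) :
    (planeRotation i j x y * N * (planeRotation i j x y)ᴴ) i i =
      x * star x * N i i + y * star y * N j j + (N i j * (x * star y) + N j i * (y * star x)) := by
  rw [mul_mul_conjTranspose_apply, planeRotation_apply_left hij]
  simp only [star_add, Pi.star_single, mulVec_add, mulVec_single, dotProduct_add, add_dotProduct,
    single_dotProduct, Pi.smul_apply, col_apply, MulOpposite.smul_eq_mul_unop, MulOpposite.unop_op]
  ring

theorem planeRotation_conj_apply_right (i j : n) (x y : R) (N : Matrix n n R) :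
    (planeRotation i j x y * N * (planeRotation i j x y)ᴴ) j j =
      y * star y * N i i + x * star x * N j j - (N i j * (x * star y) + N j i * (y * star x)) := by
  rw [mul_mul_conjTranspose_apply, planeRotation_apply_right]
  simp only [star_add, star_neg, star_star, Pi.star_single, mulVec_add, mulVec_single,
    dotProduct_add, add_dotProduct, single_dotProduct, Pi.smul_apply, col_apply,
    MulOpposite.smul_eq_mul_unop, MulOpposite.unop_op]
  ring

theorem planeRotation_conj_apply_of_ne {i j k : n} (hki : k ≠ i) (hkj : k ≠ j) (x y : R)
    (N : Matrix n n R) :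
    (planeRotation i j x y * N * (planeRotation i j x y)ᴴ) k k = N k k := by
  rw [mul_mul_conjTranspose_apply, planeRotation_apply_of_ne hki hkj]
  simp

end PlaneRotation

section ConstantDiagonal

variable {n 𝕜 : Type*} [Fintype n] [DecidableEq n] [RCLike 𝕜]

theorem exists_unitary_conj_diag_averaged (N : Matrix n n 𝕜) {i j : n} (hij : i ≠ j) :
    ∃ R ∈ unitaryGroup n 𝕜, (R * N * Rᴴ) i i = (N i i + N j j) / 2 ∧
      (R * N * Rᴴ) j j = (N i i + N j j) / 2 ∧
      ∀ k, k ≠ i → k ≠ j → (R * N * Rᴴ) k k = N k k := by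
  obtain ⟨x, y, hxy, hbal⟩ :=
    exists_unit_vector_balancing ((N i i - N j j) / 2) (N i j) (N j i)
  refine ⟨planeRotation i j x y, planeRotation_mem_unitaryGroup hij hxy, ?_, ?_,
    fun k hki hkj ↦ planeRotation_conj_apply_of_ne hki hkj x y N⟩
  · rw [planeRotation_conj_apply_left hij]
    linear_combination hbal + (N i i + N j j) / 2 * hxy
  · rw [planeRotation_conj_apply_right]
    linear_combination -hbal + (N i i + N j j) / 2 * hxy

theorem exists_unitary_sum_norm_diag_sq_lt (N : Matrix n n 𝕜) {i j : n} (hN : N i i ≠ N j j) :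
    ∃ R ∈ unitaryGroup n 𝕜, ∑ k, ‖(R * N * Rᴴ) k k‖ ^ 2 < ∑ k, ‖N k k‖ ^ 2 := by
  have hij : i ≠ j := fun h ↦ hN (by rw [h])
  obtain ⟨R, hR, hi, hj, hk⟩ := exists_unitary_conj_diag_averaged N hij
  refine ⟨R, hR, ?_⟩
  have hsplit (f : n → ℝ) : ∑ k, f k = f i + f j + ∑ k ∈ {i, j}ᶜ, f k := by
    rw [← sum_add_sum_compl {i, j}, sum_pair hij]
  have hrest : ∑ k ∈ {i, j}ᶜ, ‖(R * N * Rᴴ) k k‖ ^ 2 = ∑ k ∈ {i, j}ᶜ, ‖N k k‖ ^ 2 := by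
    refine sum_congr rfl fun k hmem ↦ ?_
    rw [mem_compl, mem_insert, mem_singleton, not_or] at hmem
    rw [hk k hmem.1 hmem.2]
  rw [hsplit, hsplit fun k ↦ ‖N k k‖ ^ 2, hrest, hi, hj, ← two_mul]
  exact add_lt_add_left (two_mul_norm_midpoint_sq_lt hN) _

theorem isCompact_unitaryGroup : IsCompact (unitaryGroup n 𝕜 : Set (Matrix n n 𝕜)) := by
  have hball : IsCompact (Set.univ.pi fun _ : n ↦ Set.univ.pi fun _ : n ↦
      Metric.closedBall (0 : 𝕜) 1) :=
    isCompact_univ_pi fun _ ↦ isCompact_univ_pi fun _ ↦ isCompact_closedBall _ _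
  refine hball.of_isClosed_subset (isClosed_unitary (R := Matrix n n 𝕜)) fun U hU i _ j _ ↦ ?_
  simpa using entry_norm_bound_of_unitary hU i j

theorem exists_unitary_conj_diag_eq (M : Matrix n n 𝕜) :
    ∃ W ∈ unitaryGroup n 𝕜, ∀ i j, (W * M * Wᴴ) i i = (W * M * Wᴴ) j j := by
  have hcont : Continuous fun W : Matrix n n 𝕜 ↦ ∑ k, ‖(W * M * Wᴴ) k k‖ ^ 2 := by fun_prop
  obtain ⟨W, hW, hmin⟩ :=
    isCompact_unitaryGroup.exists_isMinOn ⟨1, one_mem (unitaryGroup n 𝕜)⟩ hcont.continuousOn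
  refine ⟨W, hW, fun i j ↦ ?_⟩
  by_contra hne
  obtain ⟨R, hR, hlt⟩ := exists_unitary_sum_norm_diag_sq_lt _ hne
  have hconj : R * (W * M * Wᴴ) * Rᴴ = R * W * M * (R * W)ᴴ := by
    simp only [conjTranspose_mul, Matrix.mul_assoc]
  rw [hconj] at hlt
  exact (hmin (mul_mem hR hW)).not_gt hlt

theorem exists_unitary_conj_diag_eq_zero {M : Matrix n n 𝕜} (hM : M.trace = 0) :
    ∃ W ∈ unitaryGroup n 𝕜, ∀ l, (W * M * Wᴴ) l l = 0 := by
  obtain ⟨W, hW, hdiag⟩ := exists_unitary_conj_diag_eq M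
  refine ⟨W, hW, fun l ↦ ?_⟩
  have htrace : (W * M * Wᴴ).trace = 0 := by
    rw [trace_mul_comm, ← Matrix.mul_assoc, ← star_eq_conjTranspose,
      mem_unitaryGroup_iff'.mp hW, Matrix.one_mul, hM]
  have hcard : (Fintype.card n : 𝕜) * (W * M * Wᴴ) l l = 0 := by
    simp only [← htrace, trace, diag_apply, hdiag _ l, sum_const, card_univ, nsmul_eq_mul]
  have : Nonempty n := ⟨l⟩
  exact (mul_eq_zero.mp hcard).resolve_left (Nat.cast_ne_zero.mpr Fintype.card_ne_zero)

end ConstantDiagonal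

section Gram

variable {m p ν : Type*} [Fintype m] [Fintype ν]

theorem conjTranspose_mul_self_sum_smul_apply {R : Type*} [CommSemiring R] [StarRing R]
    (A : ν → Matrix m p R) (W : Matrix ν ν R) (l : ν) (a b : p) :
    ((∑ k, W l k • A k)ᴴ * ∑ k, W l k • A k) a b =
      (W * of (fun k k' ↦ ((A k')ᴴ * A k) a b) * Wᴴ) l l := by
  simp only [conjTranspose_sum, conjTranspose_smul, Matrix.sum_mul, Matrix.mul_sum,
    Matrix.smul_mul, Matrix.mul_smul, Matrix.sum_apply, Matrix.smul_apply, smul_eq_mul,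
    mul_apply (M := W * _), mul_apply (M := W), of_apply, conjTranspose_apply (M := W),
    Finset.mul_sum, Finset.sum_mul]
  rw [sum_comm]
  exact sum_congr rfl fun _ _ ↦ sum_congr rfl fun _ _ ↦ by ring

theorem exists_unitary_conjTranspose_mul_self_apply_eq_zero {𝕜 : Type*} [RCLike 𝕜]
    [DecidableEq ν] {A : ν → Matrix m p 𝕜} {a b : p} (hA : (∑ k, (A k)ᴴ * A k) a b = 0) :
    ∃ W ∈ unitaryGroup ν 𝕜, ∀ l, ((∑ k, W l k • A k)ᴴ * ∑ k, W l k • A k) a b = 0 := by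
  simp only [conjTranspose_mul_self_sum_smul_apply]
  refine exists_unitary_conj_diag_eq_zero ?_
  rwa [Matrix.sum_apply] at hA

end Gram

theorem exists_unitary_conj_isDiag {n 𝕜 : Type*} [Fintype n] [DecidableEq n] [RCLike 𝕜]
    {H : Matrix n n 𝕜} (hH : H.IsHermitian) : ∃ V ∈ unitaryGroup n 𝕜, (Vᴴ * H * V).IsDiag := by
  refine ⟨hH.eigenvectorUnitary, hH.eigenvectorUnitary.2, ?_⟩
  have hdiag := hH.conjStarAlgAut_star_eigenvectorUnitary
  rw [Unitary.conjStarAlgAut_star_apply, star_eq_conjTranspose] at hdiag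
  rw [hdiag]
  exact isDiag_diagonal _

theorem isDiag_of_isHermitian_of_card_eq_two {n R : Type*} [Fintype n] [AddMonoid R]
    [StarAddMonoid R] (hn : Fintype.card n = 2) {H : Matrix n n R} (hH : H.IsHermitian) {a b : n}
    (hab : a ≠ b) (hzero : H a b = 0) : H.IsDiag := by
  classical
  have huniv : ({a, b} : Finset n) = univ :=
    eq_univ_of_card _ (by rw [card_pair hab, hn])
  have hmem (k : n) : k = a ∨ k = b := by simpa using huniv.ge (mem_univ k)
  have hzero' : H b a = 0 := by rw [← hH.apply, hzero, star_zero]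
  intro k l hkl
  obtain rfl | rfl := hmem k <;> obtain rfl | rfl := hmem l
  · exact absurd rfl hkl
  · exact hzero
  · exact hzero'
  · exact absurd rfl hkl

section ChangeBases

variable {m p ν R : Type*} [Fintype m] [Fintype p] [Fintype ν] [CommSemiring R]

/-- The action of a change of local bases on a tripartite vector, encoded by its family `A` of
coefficient matrices: `U` acts on the row index, `V` on the column index (whence the transpose), and
`W` on the index of the family. -/
def changeBases (U : Matrix m m R) (V : Matrix p p R) (W : Matrix ν ν R)
    (A : ν → Matrix m p R) (l : ν) : Matrix m p R :=
  U * (∑ k, W l k • A k) * Vᵀ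

theorem transformedCoeff_eq_changeBases {n : ℕ} (U V : Matrix (Fin 2) (Fin 2) ℂ)
    (W : Matrix (Fin n) (Fin n) ℂ) (ψ : Fin 2 → Fin 2 → Fin n → ℂ) (l : Fin n) :
    transformedCoeff U V W ψ l = changeBases U V W (fun k ↦ of fun i j ↦ ψ i j k) l := by
  ext i j
  simp only [transformedCoeff, changeBases, mul_apply, transpose_apply, Matrix.sum_apply,
    Matrix.smul_apply, of_apply, smul_eq_mul, Finset.mul_sum, Finset.sum_mul]
  rw [sum_comm]
  refine sum_congr rfl fun _ _ ↦ ?_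
  rw [sum_comm]
  exact sum_congr rfl fun _ _ ↦ sum_congr rfl fun _ _ ↦ by ring

theorem transpose_changeBases (U : Matrix m m R) (V : Matrix p p R) (W : Matrix ν ν R)
    (A : ν → Matrix m p R) (l : ν) :
    (changeBases U V W A l)ᵀ = changeBases V U W (fun k ↦ (A k)ᵀ) l := by
  simp only [changeBases, transpose_mul, transpose_transpose, transpose_sum, transpose_smul,
    Matrix.mul_assoc]

end ChangeBases

section LocalBases

variable {m p ν 𝕜 : Type*} [Fintype m] [Fintype p] [Fintype ν]
  [DecidableEq m] [DecidableEq p] [DecidableEq ν] [RCLike 𝕜]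

theorem exists_unitary_isDiag_conjTranspose_mul_self (hp : Fintype.card p = 2)
    (A : ν → Matrix m p 𝕜) :
    ∃ V ∈ unitaryGroup p 𝕜, ∃ W ∈ unitaryGroup ν 𝕜,
      ∀ l, ((changeBases 1 V W A l)ᴴ * changeBases 1 V W A l).IsDiag := by
  have hρ : (∑ k, (A k)ᴴ * A k).IsHermitian :=
    isSelfAdjoint_sum _ fun k _ ↦ isHermitian_conjTranspose_mul_self (A k)
  obtain ⟨V, hV, hdiag⟩ := exists_unitary_conj_isDiag hρ
  have : Nontrivial p := Fintype.one_lt_card_iff_nontrivial.mp (by omega)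
  obtain ⟨a, b, hab⟩ := exists_pair_ne p
  have hzero : (∑ k, (A k * V)ᴴ * (A k * V)) a b = 0 := by
    simpa only [conjTranspose_mul, Matrix.mul_sum, Matrix.sum_mul, Matrix.mul_assoc] using hdiag hab
  obtain ⟨W, hW, hgram⟩ := exists_unitary_conjTranspose_mul_self_apply_eq_zero hzero
  refine ⟨Vᵀ, transpose_mem_unitaryGroup_iff.mpr hV, W, hW, fun l ↦ ?_⟩
  have hchange : changeBases 1 Vᵀ W A l = ∑ k, W l k • (A k * V) := by
    simp only [changeBases, Matrix.one_mul, transpose_transpose, Matrix.sum_mul, smul_mul]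
  rw [hchange]
  exact isDiag_of_isHermitian_of_card_eq_two hp (isHermitian_conjTranspose_mul_self _) hab (hgram l)

theorem exists_local_bases_diagonalizing_general (A : ν → Matrix m p 𝕜) :
    (Fintype.card p = 2 → ∃ (U : Matrix m m 𝕜) (V : Matrix p p 𝕜) (W : Matrix ν ν 𝕜),
      U ∈ unitaryGroup m 𝕜 ∧ V ∈ unitaryGroup p 𝕜 ∧ W ∈ unitaryGroup ν 𝕜 ∧
      ∀ l, ((changeBases U V W A l)ᴴ * changeBases U V W A l).IsDiag) ∧
    (Fintype.card m = 2 → ∃ (U : Matrix m m 𝕜) (V : Matrix p p 𝕜) (W : Matrix ν ν 𝕜),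
      U ∈ unitaryGroup m 𝕜 ∧ V ∈ unitaryGroup p 𝕜 ∧ W ∈ unitaryGroup ν 𝕜 ∧
      ∀ l, (changeBases U V W A l * (changeBases U V W A l)ᴴ).IsDiag) := by
  refine ⟨fun hp ↦ ?_, fun hm ↦ ?_⟩
  · obtain ⟨V, hV, W, hW, hdiag⟩ := exists_unitary_isDiag_conjTranspose_mul_self hp A
    exact ⟨1, V, W, one_mem _, hV, hW, hdiag⟩
  · obtain ⟨U, hU, W, hW, hdiag⟩ :=
      exists_unitary_isDiag_conjTranspose_mul_self hm fun k ↦ (A k)ᵀ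
    refine ⟨U, 1, W, hU, one_mem _, hW, fun l ↦ isDiag_transpose_iff.mp ?_⟩
    rw [transpose_mul, ← conjTranspose_transpose_eq_transpose_conjTranspose, transpose_changeBases]
    exact hdiag l

end LocalBases

theorem exists_local_bases_diagonalizing (n : ℕ) (ψ : Fin 2 → Fin 2 → Fin n → ℂ) :
    (∃ (U V : Matrix (Fin 2) (Fin 2) ℂ) (W : Matrix (Fin n) (Fin n) ℂ),
      U ∈ Matrix.unitaryGroup (Fin 2) ℂ ∧ V ∈ Matrix.unitaryGroup (Fin 2) ℂ ∧
      W ∈ Matrix.unitaryGroup (Fin n) ℂ ∧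
      ∀ l : Fin n, ((transformedCoeff U V W ψ l)ᴴ * transformedCoeff U V W ψ l).IsDiag) ∧
    (∃ (U' V' : Matrix (Fin 2) (Fin 2) ℂ) (W' : Matrix (Fin n) (Fin n) ℂ),
      U' ∈ Matrix.unitaryGroup (Fin 2) ℂ ∧ V' ∈ Matrix.unitaryGroup (Fin 2) ℂ ∧
      W' ∈ Matrix.unitaryGroup (Fin n) ℂ ∧
      ∀ l : Fin n, (transformedCoeff U' V' W' ψ l * (transformedCoeff U' V' W' ψ l)ᴴ).IsDiag) := by
  simpa only [transformedCoeff_eq_changeBases, Fintype.card_fin, forall_const] using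
    exists_local_bases_diagonalizing_general fun l ↦ of fun i j ↦ ψ i j l
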